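/- Suppose A is Schur (every eigenvalue of A has modulus strictly less than 1), the initial state x0 is known and fixed, and the attacker can manipulate at most q attack elements simultaneously. Then every persistent attack a with ‖a‖_0 ≤ q is asymptotically identifiable (i.e., asymptotically i-identifiable for every i ∈ {1,…,m}) if and only if 2q < min_i α_i. -/

import Mathlib

open Filter

noncomputable section

/-- State trajectory of `x(k+1) = A x(k) + B_d d(k) + B_a a(k)` with `x(0) = x0`. -/
def traj {n o m : ℕ} (A : Matrix (Fin n) (Fin n) ℂ) (Bd : Matrix (Fin n) (Fin o) ℂ)
    (Ba : Matrix (Fin n) (Fin m) ℂ) (a : ℕ → Fin m → ℂ) (d : ℕ → Fin o → ℂ)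
    (x0 : Fin n → ℂ) : ℕ → Fin n → ℂ
  | 0 => x0
  | k + 1 => A.mulVec (traj A Bd Ba a d x0 k) + Bd.mulVec (d k) + Ba.mulVec (a k)

/-- Output `y(a,d,x0)(k) = C x(k) + D_d d(k) + D_a a(k)`. -/
def output {n o m p : ℕ} (A : Matrix (Fin n) (Fin n) ℂ) (Bd : Matrix (Fin n) (Fin o) ℂ)
    (Ba : Matrix (Fin n) (Fin m) ℂ) (C : Matrix (Fin p) (Fin n) ℂ)
    (Dd : Matrix (Fin p) (Fin o) ℂ) (Da : Matrix (Fin p) (Fin m) ℂ)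
    (a : ℕ → Fin m → ℂ) (d : ℕ → Fin o → ℂ) (x0 : Fin n → ℂ) (k : ℕ) : Fin p → ℂ :=
  C.mulVec (traj A Bd Ba a d x0 k) + Dd.mulVec (d k) + Da.mulVec (a k)

/-- `‖a‖₀`: the number of component signals of `a` that are not identically zero. -/
def sparsity {m : ℕ} (a : ℕ → Fin m → ℂ) : ℕ := {j : Fin m | ∃ k, a k j ≠ 0}.ncard

/-- A persistent attack does not converge to `0`. -/
def Persistent {m : ℕ} (a : ℕ → Fin m → ℂ) : Prop := ¬ Tendsto a atTop (nhds 0)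

/-- Undetectable: some disturbance and initial state give identically zero output. -/
def Undetectable {n o m p : ℕ} (A : Matrix (Fin n) (Fin n) ℂ) (Bd : Matrix (Fin n) (Fin o) ℂ)
    (Ba : Matrix (Fin n) (Fin m) ℂ) (C : Matrix (Fin p) (Fin n) ℂ)
    (Dd : Matrix (Fin p) (Fin o) ℂ) (Da : Matrix (Fin p) (Fin m) ℂ)
    (a : ℕ → Fin m → ℂ) : Prop :=
  ∃ d x0, ∀ k, output A Bd Ba C Dd Da a d x0 k = 0

/-- Security index `α_i`: minimal `‖a‖₀` over persistent undetectable attacks whose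
`i`-th component signal is not identically zero (`⊤` if none exists). -/
def secIndex {n o m p : ℕ} (A : Matrix (Fin n) (Fin n) ℂ) (Bd : Matrix (Fin n) (Fin o) ℂ)
    (Ba : Matrix (Fin n) (Fin m) ℂ) (C : Matrix (Fin p) (Fin n) ℂ)
    (Dd : Matrix (Fin p) (Fin o) ℂ) (Da : Matrix (Fin p) (Fin m) ℂ) (i : Fin m) : ℕ∞ :=
  sInf {c : ℕ∞ | ∃ a : ℕ → Fin m → ℂ, Persistent a ∧ Undetectable A Bd Ba C Dd Da a ∧
    (∃ k, a k i ≠ 0) ∧ c = (sparsity a : ℕ∞)}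

section
open Polynomial

lemma tendsto_of_step (v : ℕ → ℂ) (r : ℂ) (hr : ‖r‖ < 1)
    (h : Tendsto (fun k => v (k+1) - r * v k) atTop (nhds 0)) : Tendsto v atTop (nhds 0) := by
  rw [Metric.tendsto_atTop] at h ⊢
  intro ε hε
  obtain ⟨N, hN⟩ := h ((1 - ‖r‖) * (ε/2)) (by have := sub_pos.2 hr; positivity)
  have hb : ∀ j, ‖v (N+j)‖ ≤ ‖r‖^j * ‖v N‖ + ε/2 := by
    intro j
    induction j with
    | zero => simp; linarith
    | succ j ih =>
      have h1 := hN (N+j) (by omega)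
      rw [dist_zero_right] at h1
      have h2 : ‖v (N+j+1)‖ ≤ ‖v (N+j+1) - r * v (N+j)‖ + ‖r‖ * ‖v (N+j)‖ := by
        rw [← norm_mul]
        simpa using norm_add_le (v (N+j+1) - r * v (N+j)) (r * v (N+j))
      have h3 := mul_le_mul_of_nonneg_left ih (norm_nonneg r)
      rw [← add_assoc, pow_succ]
      nlinarith
  have hp : Tendsto (fun j => ‖r‖^j * ‖v N‖) atTop (nhds 0) := by
    simpa using (tendsto_pow_atTop_nhds_zero_of_lt_one (norm_nonneg r) hr).mul_const ‖v N‖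
  obtain ⟨J, hJ⟩ := (Metric.tendsto_atTop.1 hp) (ε/2) (by positivity)
  refine ⟨N + J, fun k hk => ?_⟩
  obtain ⟨j, rfl⟩ : ∃ j, k = N + j := ⟨k - N, by omega⟩
  have h1 := hJ j (by omega)
  rw [Real.dist_eq, sub_zero] at h1
  have := le_abs_self (‖r‖^j * ‖v N‖)
  rw [dist_zero_right]
  linarith [hb j]

/-- left shift -/
def shiftL : (ℕ → ℂ) →ₗ[ℂ] (ℕ → ℂ) where
  toFun v k := v (k+1)
  map_add' _ _ := rfl
  map_smul' _ _ := rfl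

lemma tendsto_of_stable (p : Polynomial ℂ) (hp : p ≠ 0) (hr : ∀ z, p.IsRoot z → ‖z‖ < 1) (v : ℕ → ℂ)
    (h : Tendsto (aeval shiftL p v) atTop (nhds 0)) : Tendsto v atTop (nhds 0) := by
  induction hd : p.natDegree generalizing p with
  | zero =>
    rw [natDegree_eq_zero] at hd
    obtain ⟨c, rfl⟩ := hd
    have hc : c ≠ 0 := by rintro rfl; simp at hp
    rw [aeval_C] at h
    have h2 : Tendsto (fun k => c⁻¹ * (c * v k)) atTop (nhds (c⁻¹ * 0)) :=
      Tendsto.const_mul c⁻¹ (by exact h)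
    simpa [hc] using h2
  | succ d ih =>
    obtain ⟨r, hroot⟩ := IsAlgClosed.exists_root p (by
      intro h0; rw [natDegree_eq_of_degree_eq_some h0] at hd; simp at hd)
    obtain ⟨g, rfl⟩ := dvd_iff_isRoot.2 hroot
    have hg : g ≠ 0 := right_ne_zero_of_mul hp
    refine ih g hg (fun z hz => hr z (by simp [IsRoot.def] at hz ⊢; simp [hz])) ?_ ?_
    · apply tendsto_of_step _ r (hr r hroot)
      rw [map_mul, Module.End.mul_apply] at h
      convert h using 1
      funext k
      simp [shiftL]
    · rw [natDegree_mul (X_sub_C_ne_zero r) hg, natDegree_X_sub_C] at hd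
      omega

lemma tendsto_aeval (p : Polynomial ℂ) (v : ℕ → ℂ) (h : Tendsto v atTop (nhds 0)) :
    Tendsto (aeval shiftL p v) atTop (nhds 0) := by
  induction p using Polynomial.induction_on' with
  | add p q hp hq => 
    rw [map_add]
    have h3 := hp.add hq
    rw [add_zero] at h3
    exact h3
  | monomial n c =>
    have h1 : ∀ n, ∀ k, (shiftL ^ n) v k = v (k + n) := by
      intro n
      induction n with
      | zero => simp
      | succ n ih => intro k; rw [pow_succ', Module.End.mul_apply]; simp only [shiftL, LinearMap.coe_mk, AddHom.coe_mk]; erw [ih]; congr 1; omega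
    have h2 : aeval shiftL (monomial n c) v = fun k => c * v (k+n) := by
      funext k
      rw [aeval_monomial, Module.End.mul_apply]
      simp [h1]
    rw [h2]
    simpa using ((tendsto_add_atTop_iff_nat n).2 h).const_mul c

lemma tendsto_schur {n : ℕ} (A : Matrix (Fin n) (Fin n) ℂ) (hS : ∀ z ∈ spectrum ℂ A, ‖z‖ < 1)
    (L : Matrix (Fin n) (Fin n) ℂ →ₗ[ℂ] ℂ) : Tendsto (fun k => L (A^k)) atTop (nhds 0) := by
  apply tendsto_of_stable A.charpoly A.charpoly_monic.ne_zero
  · intro z hz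
    exact hS z (Matrix.mem_spectrum_iff_isRoot_charpoly.2 hz)
  · have : ∀ p : Polynomial ℂ, aeval shiftL p (fun k => L (A^k)) = fun k => L (A^k * aeval A p) := by
      intro p
      induction p using Polynomial.induction_on with
      | C c => funext k; simp [Algebra.algebraMap_eq_smul_one]
      | add p q hp hq => rw [map_add, LinearMap.add_apply, hp, hq]; funext k; simp [mul_add]
      | monomial n c ih =>
        rw [pow_succ', mul_left_comm, map_mul, Module.End.mul_apply, ih]
        funext k
        simp [shiftL, pow_succ, mul_assoc]
    rw [this, Matrix.aeval_self_charpoly]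
    simp

end

lemma exists_functional {F : Type*} [AddCommGroup F] [Module ℂ F] (W : Submodule ℂ F)
    (t : Polynomial ℂ →ₗ[ℂ] F) (l : ℂ) (h : ∀ g, t g ∈ W → g.eval l = 0) :
    ∃ φ : F →ₗ[ℂ] ℂ, (∀ f ∈ W, φ f = 0) ∧ ∀ g, φ (t g) = g.eval l := by
  have hm : (Polynomial.leval l : Polynomial ℂ →ₗ[ℂ] ℂ) ∈
      LinearMap.range (W.mkQ.comp t).dualMap := by
    rw [LinearMap.range_dualMap_eq_dualAnnihilator_ker, Submodule.mem_dualAnnihilator]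
    intro g hg
    exact h g (by simpa using hg)
  obtain ⟨ψ, hψ⟩ := hm
  refine ⟨ψ.comp W.mkQ, fun f hf => ?_, fun g => ?_⟩
  · have : W.mkQ f = 0 := by simpa using hf
    simp [this]
  · simpa using LinearMap.congr_fun hψ g

section
variable {n o m p : ℕ} (A : Matrix (Fin n) (Fin n) ℂ) (Bd : Matrix (Fin n) (Fin o) ℂ)
  (Ba : Matrix (Fin n) (Fin m) ℂ) (C : Matrix (Fin p) (Fin n) ℂ)
  (Dd : Matrix (Fin p) (Fin o) ℂ) (Da : Matrix (Fin p) (Fin m) ℂ)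

abbrev FF (n o m : ℕ) := (Fin n ⊕ Fin o ⊕ Fin m) → Polynomial ℂ

def sg {n o m : ℕ} (s : Fin n ⊕ Fin o ⊕ Fin m) : Polynomial ℂ →ₗ[Polynomial ℂ] FF n o m :=
  LinearMap.single _ (fun _ => Polynomial ℂ) s

def lin {r : ℕ} (P : Matrix (Fin r) (Fin n) ℂ) (Q : Matrix (Fin r) (Fin o) ℂ)
    (R : Matrix (Fin r) (Fin m) ℂ) (i : Fin r) : FF n o m :=
  ∑ j, sg (.inl j) (Polynomial.C (P i j)) + ∑ j, sg (.inr (.inl j)) (Polynomial.C (Q i j))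
    + ∑ j, sg (.inr (.inr j)) (Polynomial.C (R i j))

def relX (i : Fin n) : FF n o m := sg (.inl i) Polynomial.X - lin A Bd Ba i

def WW (S : Set (Fin m)) : Submodule (Polynomial ℂ) (FF n o m) :=
  Submodule.span _ (Set.range (relX A Bd Ba) ∪ Set.range (lin C Dd Da) ∪
    {f | ∃ j, j ∉ S ∧ f = sg (.inr (.inr j)) 1})

/-- evaluation on a trajectory -/
def EE (w : (Fin n ⊕ Fin o ⊕ Fin m) → ℕ → ℂ) : FF n o m →ₗ[ℂ] (ℕ → ℂ) where
  toFun f := ∑ s, Polynomial.aeval shiftL (f s) (w s)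
  map_add' f g := by simp [Finset.sum_add_distrib]
  map_smul' c f := by simp [Finset.smul_sum]

lemma EE_smul (w : (Fin n ⊕ Fin o ⊕ Fin m) → ℕ → ℂ) (g : Polynomial ℂ) (f : FF n o m) :
    EE w (g • f) = Polynomial.aeval shiftL g (EE w f) := by
  simp only [EE, LinearMap.coe_mk, AddHom.coe_mk, Pi.smul_apply, smul_eq_mul, map_mul,
    Module.End.mul_apply, map_sum]

lemma EE_sg (w : (Fin n ⊕ Fin o ⊕ Fin m) → ℕ → ℂ) (g : Polynomial ℂ) (s) :
    EE w (sg s g) = Polynomial.aeval shiftL g (w s) := by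
  simp only [EE, LinearMap.coe_mk, AddHom.coe_mk, sg, LinearMap.coe_single]
  rw [Finset.sum_eq_single s]
  · simp
  · intro b _ hb
    simp [hb]
  · simp

lemma EE_lin (w : (Fin n ⊕ Fin o ⊕ Fin m) → ℕ → ℂ) {r : ℕ} (P : Matrix (Fin r) (Fin n) ℂ)
    (Q : Matrix (Fin r) (Fin o) ℂ) (R : Matrix (Fin r) (Fin m) ℂ) (i : Fin r) (k : ℕ) :
    EE w (lin P Q R i) k = (P.mulVec (fun j => w (.inl j) k) +
      Q.mulVec (fun j => w (.inr (.inl j)) k) + R.mulVec (fun j => w (.inr (.inr j)) k)) i := by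
  simp [lin, EE_sg, Matrix.mulVec, dotProduct]

lemma sg_pow_C (k : ℕ) (c : ℂ) (s : Fin n ⊕ Fin o ⊕ Fin m) :
    (Polynomial.X ^ k : Polynomial ℂ) • (sg s (Polynomial.C c) : FF n o m)
      = c • sg s (Polynomial.X ^ k) := by
  rw [← map_smul, ← LinearMap.map_smul_of_tower]
  congr 1
  rw [smul_eq_mul, mul_comm, Polynomial.smul_eq_C_mul]

lemma phi_lin (φ : FF n o m →ₗ[ℂ] ℂ) {r : ℕ} (P : Matrix (Fin r) (Fin n) ℂ)
    (Q : Matrix (Fin r) (Fin o) ℂ) (R : Matrix (Fin r) (Fin m) ℂ) (i : Fin r) (k : ℕ) :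
    φ ((Polynomial.X ^ k : Polynomial ℂ) • lin P Q R i) =
      (P.mulVec (fun j => φ (sg (.inl j) (Polynomial.X ^ k))) +
      Q.mulVec (fun j => φ (sg (.inr (.inl j)) (Polynomial.X ^ k))) +
      R.mulVec (fun j => φ (sg (.inr (.inr j)) (Polynomial.X ^ k)))) i := by
  simp only [lin, smul_add, Finset.smul_sum, sg_pow_C, map_add, map_sum, map_smul, smul_eq_mul,
    Matrix.mulVec, dotProduct, Pi.add_apply]

lemma key (S : Set (Fin m)) (i : Fin m) (a : ℕ → Fin m → ℂ) (d : ℕ → Fin o → ℂ)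
    (x0 : Fin n → ℂ) (hS : ∀ j, j ∉ S → ∀ k, a k j = 0)
    (hi : ¬ Tendsto (fun k => a k i) atTop (nhds 0))
    (hy : Tendsto (output A Bd Ba C Dd Da a d x0) atTop (nhds 0)) :
    ∃ b : ℕ → Fin m → ℂ, (∀ j, j ∉ S → ∀ k, b k j = 0) ∧
      ¬ Tendsto (fun k => b k i) atTop (nhds 0) ∧ Undetectable A Bd Ba C Dd Da b := by
  classical
  have hA : ∀ g : Polynomial ℂ, sg (.inr (.inr i)) g ∈ WW A Bd Ba C Dd Da S →
      g ≠ 0 → ∃ z, g.IsRoot z ∧ 1 ≤ ‖z‖ := by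
    intro g hg hg0
    by_contra! hcon
    apply hi
    let w : (Fin n ⊕ Fin o ⊕ Fin m) → ℕ → ℂ := Sum.elim (fun j k => traj A Bd Ba a d x0 k j)
      (Sum.elim (fun j k => d k j) (fun j k => a k j))
    have hW : ∀ f ∈ WW A Bd Ba C Dd Da S, Tendsto (EE w f) atTop (nhds 0) := by
      intro f hf
      induction hf using Submodule.span_induction with
      | mem f hf =>
        rcases hf with (⟨l, rfl⟩ | ⟨l, rfl⟩) | ⟨j, hj, rfl⟩
        · have : EE w (relX A Bd Ba l) = fun _ => 0 := by
            funext k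
            rw [relX, map_sub, Pi.sub_apply, EE_lin, EE_sg, Polynomial.aeval_X]
            simp [w, shiftL, traj]
          rw [this]; exact tendsto_const_nhds
        · have : EE w (lin C Dd Da l) = fun k => output A Bd Ba C Dd Da a d x0 k l := by
            funext k
            rw [EE_lin]
            simp [w, output]
          rw [this]
          exact (tendsto_pi_nhds.1 hy) l
        · have : EE w (sg (.inr (.inr j)) 1) = fun _ => 0 := by
            funext k
            rw [EE_sg]
            simp [w, hS j hj]
          rw [this]; exact tendsto_const_nhds
      | zero => rw [map_zero]; exact tendsto_const_nhds
      | add f g _ _ h1 h2 =>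
        have h3 := h1.add h2
        rw [add_zero] at h3
        rw [map_add]; exact h3
      | smul c f _ h1 => rw [EE_smul]; exact tendsto_aeval c _ h1
    have h1 := hW _ hg
    rw [EE_sg] at h1
    exact tendsto_of_stable g hg0 hcon _ h1
  obtain ⟨l, hl, hker⟩ : ∃ l : ℂ, 1 ≤ ‖l‖ ∧
      ∀ g : Polynomial ℂ, sg (.inr (.inr i)) g ∈ WW A Bd Ba C Dd Da S → g.eval l = 0 := by
    let I : Ideal (Polynomial ℂ) := (WW A Bd Ba C Dd Da S).comap (sg (.inr (.inr i)))
    obtain ⟨g, hg⟩ := (IsPrincipalIdealRing.principal I).principal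
    have hmem : ∀ f, sg (.inr (.inr i)) f ∈ WW A Bd Ba C Dd Da S ↔ g ∣ f := by
      intro f
      rw [← Ideal.mem_span_singleton, ← Ideal.submodule_span_eq, ← hg]
      rfl
    by_cases hg0 : g = 0
    · refine ⟨1, by simp, fun f hf => ?_⟩
      rw [hmem, hg0, zero_dvd_iff] at hf
      simp [hf]
    · obtain ⟨z, hz, hz1⟩ := hA g ((hmem g).2 dvd_rfl) hg0
      refine ⟨z, hz1, fun f hf => ?_⟩
      exact hz.dvd ((hmem f).1 hf)
  obtain ⟨φ, hφ, hφ2⟩ := exists_functional ((WW A Bd Ba C Dd Da S).restrictScalars ℂ)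
    ((sg (.inr (.inr i))).restrictScalars ℂ) l hker
  have hφW : ∀ (k : ℕ), ∀ f ∈ WW A Bd Ba C Dd Da S,
      φ ((Polynomial.X ^ k : Polynomial ℂ) • f) = 0 := fun k f hf =>
    hφ _ ((WW A Bd Ba C Dd Da S).smul_mem _ hf)
  let b : ℕ → Fin m → ℂ := fun k j => φ (sg (.inr (.inr j)) (Polynomial.X ^ k))
  let e : ℕ → Fin o → ℂ := fun k j => φ (sg (.inr (.inl j)) (Polynomial.X ^ k))
  let x : ℕ → Fin n → ℂ := fun k j => φ (sg (.inl j) (Polynomial.X ^ k))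
  refine ⟨b, ?_, ?_, e, x 0, ?_⟩
  · intro j hj k
    have := hφW k _ (Submodule.subset_span (Or.inr ⟨j, hj, rfl⟩))
    rw [← map_smul, smul_eq_mul, mul_one] at this
    exact this
  · have hb : (fun k => b k i) = fun k => l ^ k := by
      funext k
      have := hφ2 (Polynomial.X ^ k)
      simpa using this
    rw [hb]
    intro ht
    have h1 := ht.norm
    rw [norm_zero] at h1
    have h2 := ge_of_tendsto' (b := (1:ℝ)) h1 (fun k => by
      rw [norm_pow]; exact one_le_pow₀ hl)
    linarith
  · have hx : ∀ k, traj A Bd Ba b e (x 0) k = x k := by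
      intro k
      induction k with
      | zero => rfl
      | succ k ih =>
        rw [traj, ih]
        funext j
        have := hφW k _ (Submodule.subset_span (Or.inl (Or.inl ⟨j, rfl⟩)))
        rw [relX, smul_sub, map_sub, phi_lin, ← map_smul, smul_eq_mul, ← pow_succ,
          sub_eq_zero] at this
        exact this.symm
    intro k
    rw [output, hx]
    funext j
    have := hφW k _ (Submodule.subset_span (Or.inl (Or.inr ⟨j, rfl⟩)))
    rw [phi_lin] at this
    exact this

lemma traj_sub (a a' : ℕ → Fin m → ℂ) (d d' : ℕ → Fin o → ℂ) (x x' : Fin n → ℂ) (k : ℕ) :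
    traj A Bd Ba (fun k => a' k - a k) (fun k => d' k - d k) (x' - x) k =
      traj A Bd Ba a' d' x' k - traj A Bd Ba a d x k := by
  induction k with
  | zero => rfl
  | succ k ih => rw [traj, traj, traj, ih]; simp only [Matrix.mulVec_sub]; abel

lemma output_sub (a a' : ℕ → Fin m → ℂ) (d d' : ℕ → Fin o → ℂ) (x x' : Fin n → ℂ) (k : ℕ) :
    output A Bd Ba C Dd Da (fun k => a' k - a k) (fun k => d' k - d k) (x' - x) k =
      output A Bd Ba C Dd Da a' d' x' k - output A Bd Ba C Dd Da a d x k := by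
  rw [output, output, output, traj_sub]; simp only [Matrix.mulVec_sub]; abel

lemma traj_free (x : Fin n → ℂ) (k : ℕ) :
    traj A Bd Ba (fun _ => 0) (fun _ => 0) x k = (A ^ k).mulVec x := by
  induction k with
  | zero => simp [traj]
  | succ k ih => rw [traj, ih]; simp [pow_succ']

lemma output_free (hSchur : ∀ z ∈ spectrum ℂ A, ‖z‖ < 1) (x : Fin n → ℂ) :
    Tendsto (output A Bd Ba C Dd Da (fun _ => 0) (fun _ => 0) x) atTop (nhds 0) := by
  rw [tendsto_pi_nhds]
  intro l
  let L : Matrix (Fin n) (Fin n) ℂ →ₗ[ℂ] ℂ :=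
    { toFun := fun M => C.mulVec (M.mulVec x) l
      map_add' := fun M N => by rw [Matrix.add_mulVec, Matrix.mulVec_add]; rfl
      map_smul' := fun c M => by rw [Matrix.smul_mulVec, Matrix.mulVec_smul]; rfl }
  have h := tendsto_schur A hSchur L
  have h2 : (fun k => output A Bd Ba C Dd Da (fun _ => 0) (fun _ => 0) x k l) =
      fun k => L (A ^ k) := by
    funext k
    rw [output, traj_free]
    simp [L]
  rw [h2]
  exact h

lemma sparsity_le {a : ℕ → Fin m → ℂ} (S : Set (Fin m)) (h : ∀ j, j ∉ S → ∀ k, a k j = 0) :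
    sparsity a ≤ S.ncard := by
  apply Set.ncard_le_ncard _ S.toFinite
  rintro j ⟨k, hk⟩
  by_contra hj
  exact hk (h j hj k)

end

variable {n o m p : ℕ} (A : Matrix (Fin n) (Fin n) ℂ) (Bd : Matrix (Fin n) (Fin o) ℂ)
  (Ba : Matrix (Fin n) (Fin m) ℂ) (C : Matrix (Fin p) (Fin n) ℂ)
  (Dd : Matrix (Fin p) (Fin o) ℂ) (Da : Matrix (Fin p) (Fin m) ℂ)

/-- with `A` Schur and a known, fixed initial state `x0`, every persistent
attack of sparsity at most `q` is asymptotically identifiable (asymptotically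
`i`-identifiable for every `i`) iff `2q < min_i α_i`. -/
theorem asympIdentifiable_iff_two_mul_lt_min_secIndex
    (hSchur : ∀ z ∈ spectrum ℂ A, ‖z‖ < 1) (x0 : Fin n → ℂ) (q : ℕ) :
    (∀ a : ℕ → Fin m → ℂ, Persistent a → sparsity a ≤ q →
      ∀ i : Fin m, ∀ a' : ℕ → Fin m → ℂ, sparsity a' ≤ q →
        ¬ Tendsto (fun k => a' k i - a k i) atTop (nhds 0) →
        ∀ d d' : ℕ → Fin o → ℂ,
          ¬ Tendsto (fun k => output A Bd Ba C Dd Da a' d' x0 k -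
              output A Bd Ba C Dd Da a d x0 k) atTop (nhds 0)) ↔
    ((2 * q : ℕ) : ℕ∞) < ⨅ i : Fin m, secIndex A Bd Ba C Dd Da i := by
  classical
  constructor
  · intro H
    by_contra hcon
    obtain ⟨b, hbP, ⟨e, z0, hz⟩, hbs⟩ : ∃ b : ℕ → Fin m → ℂ, Persistent b ∧
        Undetectable A Bd Ba C Dd Da b ∧ sparsity b ≤ 2 * q := by
      by_contra! hno
      apply hcon
      have h1 : ((2 * q : ℕ) : ℕ∞) + 1 ≤ ⨅ i : Fin m, secIndex A Bd Ba C Dd Da i := by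
        refine le_iInf fun i => le_sInf ?_
        rintro c ⟨b, hb1, hb2, _, rfl⟩
        exact_mod_cast hno b hb1 hb2
      refine lt_of_lt_of_le ?_ h1
      exact_mod_cast Nat.lt_succ_self (2 * q)
    obtain ⟨i, hi⟩ : ∃ i, ¬ Tendsto (fun k => b k i) atTop (nhds 0) := by
      by_contra! hall
      exact hbP (tendsto_pi_nhds.2 hall)
    let T : Finset (Fin m) := Finset.univ.filter fun j => ∃ k, b k j ≠ 0
    have hT : T.card ≤ 2 * q := by
      have : (T : Set (Fin m)) = {j | ∃ k, b k j ≠ 0} := by ext; simp [T]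
      rw [sparsity, ← this, Set.ncard_coe_finset] at hbs
      exact hbs
    have hiT : i ∈ T := by
      by_contra hn
      simp [T] at hn
      exact hi (by simp [hn])
    have hTpos : 0 < T.card := Finset.card_pos.2 ⟨i, hiT⟩
    obtain ⟨S, hiS, hST, hSq, hTS⟩ : ∃ S : Finset (Fin m), i ∈ S ∧ S ⊆ T ∧ S.card ≤ q ∧
        (T \ S).card ≤ q := by
      by_cases hle : T.card ≤ q
      · exact ⟨T, hiT, le_rfl, hle, by simp⟩
      · obtain ⟨S, h1, h2, h3⟩ := Finset.exists_subsuperset_card_eq (s := {i}) (t := T) (n := q)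
          (by simpa using hiT) (by simp; omega) (by omega)
        refine ⟨S, by simpa using h1, h2, h3.le, ?_⟩
        rw [Finset.card_sdiff_of_subset h2]
        omega
    have hbT : ∀ j, j ∉ T → ∀ k, b k j = 0 := by
      intro j hj
      simpa [T] using hj
    let a : ℕ → Fin m → ℂ := fun k j => if j ∈ S then - b k j else 0
    let a' : ℕ → Fin m → ℂ := fun k j => if j ∈ S then 0 else b k j
    have hab : (fun k => a' k - a k) = b := by
      funext k j
      by_cases hj : j ∈ S <;> simp [a, a', hj]
    have hai : (fun k => a k i) = fun k => - b k i := by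
      funext k
      simp [a, hiS]
    refine H a ?_ ?_ i a' ?_ ?_ (fun _ => 0) e ?_
    · intro h
      have h1 := (tendsto_pi_nhds.1 h) i
      rw [hai] at h1
      exact hi (by simpa using h1.neg)
    · refine (sparsity_le (S : Set (Fin m)) ?_).trans (by rw [Set.ncard_coe_finset]; exact hSq)
      intro j hj k
      simp [a, show j ∉ S from hj]
    · refine (sparsity_le ((T \ S : Finset (Fin m)) : Set (Fin m)) ?_).trans
        (by rw [Set.ncard_coe_finset]; exact hTS)
      intro j hj k
      by_cases hjS : j ∈ S
      · simp [a', hjS]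
      · have : j ∉ T := fun h => hj (by simp [h, hjS])
        simp [a', hjS, hbT j this]
    · have : (fun k => a' k i - a k i) = fun k => b k i := by
        funext k
        exact congrFun (congrFun hab k) i
      rw [this]; exact hi
    · have h1 := (output_free A Bd Ba C Dd Da hSchur (-z0))
      have h2 : (fun k => output A Bd Ba C Dd Da a' e x0 k -
          output A Bd Ba C Dd Da a (fun _ => 0) x0 k) =
          output A Bd Ba C Dd Da (fun _ => 0) (fun _ => 0) (-z0) := by
        funext k
        have h3 := output_sub A Bd Ba C Dd Da a a' (fun _ => 0) e x0 x0 k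
        have h4 := output_sub A Bd Ba C Dd Da b b e e z0 0 k
        rw [hz k] at h4
        rw [← h3, hab]
        simp only [sub_self, zero_sub, sub_zero] at h4 ⊢
        exact h4.symm
      rw [h2]; exact h1
  · intro H a _ hq i a' hq' hi d d' hy
    let S : Set (Fin m) := {j | ∃ k, a' k j ≠ 0} ∪ {j | ∃ k, a k j ≠ 0}
    have hS : S.ncard ≤ 2 * q := by
      refine (Set.ncard_union_le _ _).trans ?_
      rw [two_mul]
      exact add_le_add hq' hq
    obtain ⟨b, hbS, hbi, hbU⟩ := key A Bd Ba C Dd Da S i (fun k => a' k - a k)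
      (fun k => d' k - d k) (x0 - x0) (by
        intro j hj k
        simp only [S, Set.mem_union, Set.mem_setOf_eq, not_or, not_exists, not_not] at hj
        simp [hj.1 k, hj.2 k]) hi (by
        have h2 : output A Bd Ba C Dd Da (fun k => a' k - a k) (fun k => d' k - d k) (x0 - x0) = _ :=
          funext fun k => output_sub A Bd Ba C Dd Da a a' d d' x0 x0 k
        rw [h2]; exact hy)
    have h1 : secIndex A Bd Ba C Dd Da i ≤ (sparsity b : ℕ∞) := by
      apply sInf_le
      refine ⟨b, fun h => hbi ((tendsto_pi_nhds.1 h) i), hbU, ?_, rfl⟩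
      by_contra! h0
      exact hbi (by simp [h0])
    have h2 : (sparsity b : ℕ∞) ≤ ((2 * q : ℕ) : ℕ∞) :=
      Nat.cast_le.2 ((sparsity_le S hbS).trans hS)
    exact absurd (H.trans_le ((iInf_le _ i).trans (h1.trans h2))) (lt_irrefl _)
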